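/- Let n ≥ 2. Let H̄ ⊂ ℝPⁿ be a projective subspace of codimension 1 (the projectivization of an n-dimensional linear subspace H ⊂ ℝ^{n+1}), and let p̄₁, ..., p̄_{n+1} ∈ H̄ be generic in H̄ (i.e., for any lifts in H, every n of the n+1 lifts are linearly independent). Let p̄_{n+2} ∈ ℝPⁿ \ H̄. Let F : ℝPⁿ → ℝPⁿ be an injective mapping that maps any projective line containing one of the points p̄₁, ..., p̄_{n+2} onto a projective line. Then F is a projective-linear mapping. -/

import Mathlib

open scoped LinearAlgebra.Projectivization

/-- A subset of `ℝPⁿ` (the projectivization of `ℝ^{n+1}`) is a projective line if it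
consists of all projective points lying in a fixed two-dimensional linear subspace. -/
def IsProjLine {n : ℕ} (l : Set (ℙ ℝ (Fin (n + 1) → ℝ))) : Prop :=
  ∃ W : Submodule ℝ (Fin (n + 1) → ℝ), Module.finrank ℝ W = 2 ∧
    l = {p | p.submodule ≤ W}

/-- A self-map of `ℝPⁿ` is projective-linear if it is induced by an invertible linear
transformation of `ℝ^{n+1}`. -/
def IsProjLinear {n : ℕ} (F : ℙ ℝ (Fin (n + 1) → ℝ) → ℙ ℝ (Fin (n + 1) → ℝ)) : Prop :=
  ∃ A : (Fin (n + 1) → ℝ) ≃ₗ[ℝ] (Fin (n + 1) → ℝ),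
    F = Projectivization.map (A : (Fin (n + 1) → ℝ) →ₗ[ℝ] (Fin (n + 1) → ℝ)) A.injective

/-!
Since `F` is injective and maps lines through `p₁, …, pₙ, r` onto lines, it preserves and reflects
incidence with the faces of the simplex spanned by these points. Hence the images of the `n + 2`
given points are in the same general position as the points themselves, and after linear changes of
coordinates in the source and in the target we may assume that `F` fixes the coordinate simplex and
the point `u = (1 : … : 1 : 0)`, which represents `pₙ₊₁`, while `r` is the origin of the affine
chart complementary to `H`.

As `F` preserves the spans of coordinate faces with a point, it acts in this chart on each
coordinate separately, and since the diagonal passes through `u`, by the same function `f` on all of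
them. A line through `u` is a translate `{x + t (1, …, 1)}` of the diagonal; comparing two of its
coordinates, which exist because `n ≥ 2`, shows that `f` is additive. A line through `r` is `{t x}`,
and the same comparison shows that `f` is multiplicative up to the factor `f 1`. So `f` is a ring
homomorphism times a constant, and the only ring endomorphism of `ℝ` is the identity.
-/

section Points

variable {K V : Type*} [DivisionRing K] [AddCommGroup V] [Module K V]

/-- A set of points of a projective space is a line if it consists of the points lying in a
two-dimensional linear subspace; over `ℝ` this is `IsProjLine`. -/
def IsLine (l : Set (ℙ K V)) : Prop :=
  ∃ S : Submodule K V, Module.finrank K S = 2 ∧ l = {P | P.submodule ≤ S}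

theorem submodule_le_iff_rep_mem {P : ℙ K V} {S : Submodule K V} :
    P.submodule ≤ S ↔ P.rep ∈ S := by
  rw [Projectivization.submodule_eq, Submodule.span_singleton_le_iff_mem]

theorem mk_submodule_le_iff {v : V} {hv : v ≠ 0} {S : Submodule K V} :
    (Projectivization.mk K v hv).submodule ≤ S ↔ v ∈ S := by
  rw [Projectivization.submodule_mk, Submodule.span_singleton_le_iff_mem]

theorem not_submodule_le_bot (P : ℙ K V) : ¬ P.submodule ≤ ⊥ := fun h =>
  P.rep_nonzero (submodule_le_iff_rep_mem.1 h)

theorem eq_of_submodule_le_submodule {P Q : ℙ K V} (h : P.submodule ≤ Q.submodule) : P = Q :=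
  Projectivization.submodule_injective <| Submodule.eq_of_le_of_finrank_eq h <| by
    rw [Projectivization.finrank_submodule, Projectivization.finrank_submodule]

theorem setOf_submodule_le_submodule (P : ℙ K V) :
    {Q : ℙ K V | Q.submodule ≤ P.submodule} = {P} :=
  Set.eq_singleton_iff_unique_mem.2 ⟨le_refl P.submodule, fun _ => eq_of_submodule_le_submodule⟩

theorem finrank_submodule_sup_submodule {P Q : ℙ K V} (h : P ≠ Q) :
    Module.finrank K ↥(P.submodule ⊔ Q.submodule) = 2 := by
  have hspan : P.submodule ⊔ Q.submodule = Submodule.span K (Set.range ![P.rep, Q.rep]) := by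
    rw [P.submodule_eq, Q.submodule_eq, Matrix.range_cons_cons_empty, Submodule.span_insert]
  rw [hspan, finrank_span_eq_card (Projectivization.linearIndependent_pair_iff_ne.2 h),
    Fintype.card_fin]

theorem submodule_le_submodule_sup_iff {P Q : ℙ K V} {S : Submodule K V} :
    P.submodule ≤ Q.submodule ⊔ S ↔
      P = Q ∨ ∃ R : ℙ K V, R.submodule ≤ S ∧ P.submodule ≤ Q.submodule ⊔ R.submodule := by
  constructor
  · intro h
    obtain ⟨a, ha, b, hb, hab⟩ := Submodule.mem_sup.1 (submodule_le_iff_rep_mem.1 h)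
    rcases eq_or_ne b 0 with rfl | hb0
    · refine .inl (eq_of_submodule_le_submodule (submodule_le_iff_rep_mem.2 ?_))
      rwa [← hab, add_zero]
    · refine .inr ⟨.mk K b hb0, mk_submodule_le_iff.2 hb,
        submodule_le_iff_rep_mem.2 (hab ▸ ?_)⟩
      exact Submodule.add_mem_sup ha (Submodule.mem_span_singleton_self b)
  · rintro (rfl | ⟨R, hR, hP⟩)
    · exact le_sup_left
    · exact hP.trans (sup_le_sup_left hR _)

end Points

section Maps

variable {K L V W : Type*} [DivisionRing K] [DivisionRing L] [AddCommGroup V] [Module K V]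
  [AddCommGroup W] [Module L W]

theorem submodule_map {σ : K →+* L} [RingHomSurjective σ] (f : V →ₛₗ[σ] W)
    (hf : Function.Injective f) (P : ℙ K V) :
    (Projectivization.map f hf P).submodule = P.submodule.map f := by
  induction P with | h v hv =>
  rw [Projectivization.map_mk, Projectivization.submodule_mk, Projectivization.submodule_mk,
    Submodule.map_span, Set.image_singleton]

theorem mem_range_map_iff {σ : K →+* L} [RingHomSurjective σ] (f : V →ₛₗ[σ] W)
    (hf : Function.Injective f) {P : ℙ L W} :
    P ∈ Set.range (Projectivization.map f hf) ↔ P.submodule ≤ LinearMap.range f := by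
  constructor
  · rintro ⟨Q, rfl⟩
    rw [submodule_map]
    exact LinearMap.map_le_range
  · intro h
    obtain ⟨v, hv⟩ := submodule_le_iff_rep_mem.1 h
    have hv0 : v ≠ 0 := fun h0 => P.rep_nonzero (by rw [← hv, h0, map_zero])
    refine ⟨.mk K v hv0, ?_⟩
    simp only [Projectivization.map_mk, hv, Projectivization.mk_rep]

theorem map_le_map_sup_map_iff {σ : K →+* L} [RingHomSurjective σ] (f : V →ₛₗ[σ] W)
    (hf : Function.Injective f) {P Q R : ℙ K V} :
    (Projectivization.map f hf R).submodule ≤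
        (Projectivization.map f hf Q).submodule ⊔ (Projectivization.map f hf P).submodule ↔
      R.submodule ≤ Q.submodule ⊔ P.submodule := by
  simp only [submodule_map, ← Submodule.map_sup, Submodule.map_le_map_iff_of_injective hf]

/-- For every `P`, the map `F` sends the line through `Q` and `P` into the line through `F Q` and
`F P`. For `P = Q` the condition is void, the "line" being a point. -/
def MapsLinesInto (F : ℙ K V → ℙ L W) (Q : ℙ K V) : Prop :=
  ∀ ⦃P R : ℙ K V⦄, R.submodule ≤ Q.submodule ⊔ P.submodule →
    (F R).submodule ≤ (F Q).submodule ⊔ (F P).submodule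

/-- For every `P`, the map `F` sends the line through `Q` and `P` onto the line through `F Q` and
`F P`. For `P = Q` the condition is void, the "line" being a point. -/
def MapsLinesOnto (F : ℙ K V → ℙ L W) (Q : ℙ K V) : Prop :=
  ∀ P : ℙ K V, F '' {R | R.submodule ≤ Q.submodule ⊔ P.submodule} =
    {R | R.submodule ≤ (F Q).submodule ⊔ (F P).submodule}

variable {F : ℙ K V → ℙ L W} {Q : ℙ K V}

theorem MapsLinesOnto.mapsLinesInto (h : MapsLinesOnto F Q) : MapsLinesInto F Q :=
  fun P _ hR => (h P).subset (Set.mem_image_of_mem F hR)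

theorem mapsLinesOnto_of_isLine_image (hinj : Function.Injective F)
    (hline : ∀ l : Set (ℙ K V), IsLine l → Q ∈ l → IsLine (F '' l)) : MapsLinesOnto F Q := by
  intro P
  rcases eq_or_ne Q P with rfl | hne
  · rw [sup_idem, sup_idem, setOf_submodule_le_submodule, setOf_submodule_le_submodule,
      Set.image_singleton]
  · obtain ⟨T, hT, himage⟩ :=
      hline _ ⟨_, finrank_submodule_sup_submodule hne, rfl⟩ (le_sup_left (a := Q.submodule))
    have hmem {R : ℙ K V} (hR : R.submodule ≤ Q.submodule ⊔ P.submodule) : (F R).submodule ≤ T :=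
      himage.subset (Set.mem_image_of_mem F hR)
    have : Module.Finite L T := Module.finite_of_finrank_eq_succ hT
    rw [himage, Submodule.eq_of_le_of_finrank_eq (sup_le (hmem le_sup_left) (hmem le_sup_right))
      (by rw [hT, finrank_submodule_sup_submodule (hinj.ne hne)])]

end Maps

section Faces

variable {κ K L V W : Type*} [DivisionRing K] [DivisionRing L] [AddCommGroup V] [Module K V]
  [AddCommGroup W] [Module L W]

/-- The face spanned by the points `p i`, `i ∈ s`, of the simplex with vertices `p`, as a linear
subspace. -/
def face (p : κ → ℙ K V) (s : Set κ) : Submodule K V :=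
  ⨆ i ∈ s, (p i).submodule

variable {p : κ → ℙ K V} {s : Set κ}

theorem face_eq_span : face p s = Submodule.span K (Projectivization.rep ∘ p '' s) := by
  simp only [face, Projectivization.submodule_eq, Set.image_eq_iUnion, Submodule.span_iUnion₂,
    Function.comp_apply]

theorem face_empty : face p ∅ = ⊥ :=
  iSup_emptyset

theorem face_singleton (i : κ) : face p {i} = (p i).submodule :=
  iSup_singleton

theorem face_insert (i : κ) : face p (insert i s) = (p i).submodule ⊔ face p s :=
  iSup_insert

theorem face_congr {q : κ → ℙ K V} (h : Set.EqOn p q s) : face p s = face q s :=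
  biSup_congr fun i hi => by rw [h hi]

theorem map_face {σ : K →+* L} [RingHomSurjective σ] (f : V →ₛₗ[σ] W)
    (hf : Function.Injective f) :
    (face p s).map f = face (Projectivization.map f hf ∘ p) s := by
  simp only [face, Submodule.map_iSup, Function.comp_apply, submodule_map]

theorem independent_iff_not_le_face :
    Projectivization.Independent p ↔ ∀ i, ¬ (p i).submodule ≤ face p {i}ᶜ := by
  simp only [Projectivization.independent_iff, linearIndependent_iff_notMem_span,
    submodule_le_iff_rep_mem, face_eq_span, ← Set.compl_eq_univ_sdiff, Function.comp_def]

variable [Finite κ] {F : ℙ K V → ℙ L W}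

theorem map_le_face_sup (hp : ∀ i ∈ s, MapsLinesInto F (p i)) {S : Submodule K V}
    {T : Submodule L W} (hST : ∀ P : ℙ K V, P.submodule ≤ S → (F P).submodule ≤ T) {P : ℙ K V}
    (hP : P.submodule ≤ face p s ⊔ S) : (F P).submodule ≤ face (F ∘ p) s ⊔ T := by
  induction s, s.toFinite using Set.Finite.induction_on generalizing P with
  | empty =>
    rw [face_empty, bot_sup_eq] at hP ⊢
    exact hST P hP
  | @insert i s _ _ ih =>
    rw [face_insert, sup_assoc] at hP ⊢
    obtain rfl | ⟨Q, hQ, hPQ⟩ := submodule_le_submodule_sup_iff.1 hP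
    · exact le_sup_left
    · have hFQ := ih (fun j hj => hp j (.inr hj)) hQ
      exact (hp i (.inl rfl) hPQ).trans (sup_le_sup_left hFQ _)

theorem map_le_face (hp : ∀ i ∈ s, MapsLinesInto F (p i)) {P : ℙ K V}
    (hP : P.submodule ≤ face p s) : (F P).submodule ≤ face (F ∘ p) s := by
  rw [← sup_bot_eq (face _ s)] at hP ⊢
  exact map_le_face_sup hp (fun Q hQ => absurd hQ (not_submodule_le_bot Q)) hP

theorem exists_map_eq_of_le_face (hp : ∀ i ∈ s, MapsLinesOnto F (p i)) {B : ℙ L W}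
    (hB : B.submodule ≤ face (F ∘ p) s) : ∃ R : ℙ K V, R.submodule ≤ face p s ∧ F R = B := by
  induction s, s.toFinite using Set.Finite.induction_on generalizing B with
  | empty => exact absurd (face_empty (p := F ∘ p) ▸ hB) (not_submodule_le_bot B)
  | @insert i s _ _ ih =>
    rw [face_insert] at hB
    obtain rfl | ⟨A, hA, hBA⟩ := submodule_le_submodule_sup_iff.1 hB
    · exact ⟨p i, face_insert (p := p) i ▸ le_sup_left, rfl⟩
    · obtain ⟨P, hP, rfl⟩ := ih (fun j hj => hp j (.inr hj)) hA
      obtain ⟨R, hR, rfl⟩ := (hp i (.inl rfl) P).superset hBA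
      refine ⟨R, ?_, rfl⟩
      rw [face_insert]
      exact le_trans hR (sup_le_sup_left hP _)

theorem map_le_face_iff (hinj : Function.Injective F) (hp : ∀ i, MapsLinesOnto F (p i))
    {P : ℙ K V} : (F P).submodule ≤ face (F ∘ p) s ↔ P.submodule ≤ face p s := by
  refine ⟨fun h => ?_, map_le_face fun i _ => (hp i).mapsLinesInto⟩
  obtain ⟨Q, hQ, hFQ⟩ := exists_map_eq_of_le_face (fun i _ => hp i) h
  rwa [← hinj hFQ]

end Faces

section Frames

variable {κ K L V W : Type*} [DivisionRing K] [DivisionRing L] [AddCommGroup V] [Module K V]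
  [AddCommGroup W] [Module L W]

/-- The points `p i` are the vertices of a simplex, and `q` lies in the facet opposite to the vertex
`p o`, in general position with respect to the other vertices. Compared with a projective frame,
the unit point is taken in a facet instead of outside all facets. -/
structure IsFacetFrame (o : κ) (p : κ → ℙ K V) (q : ℙ K V) : Prop where
  independent : Projectivization.Independent p
  unit_le_face : q.submodule ≤ face p {o}ᶜ
  unit_not_le_face : ∀ i ≠ o, ¬ q.submodule ≤ face p {o, i}ᶜ

variable {o : κ} {p : κ → ℙ K V} {q : ℙ K V}

theorem IsFacetFrame.map [Finite κ] (h : IsFacetFrame o p q) {F : ℙ K V → ℙ L W}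
    (hinj : Function.Injective F) (hp : ∀ i, MapsLinesOnto F (p i)) :
    IsFacetFrame o (F ∘ p) (F q) where
  independent := independent_iff_not_le_face.2 fun i hi =>
    independent_iff_not_le_face.1 h.independent i ((map_le_face_iff hinj hp).1 hi)
  unit_le_face := (map_le_face_iff hinj hp).2 h.unit_le_face
  unit_not_le_face i hi hle := h.unit_not_le_face i hi ((map_le_face_iff hinj hp).1 hle)

variable [DecidableEq κ]

variable (K) in
/-- The `i`-th vertex of the coordinate simplex. -/
def stdVertex (i : κ) : ℙ K (κ → K) :=
  .mk K (Pi.single i 1) (by simp)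

variable (K) in
/-- The point all of whose homogeneous coordinates are `1`, except for the `o`-th, which is `0`. -/
def stdUnit [Nontrivial κ] (o : κ) : ℙ K (κ → K) :=
  .mk K (Function.update 1 o 0) fun h => by
    obtain ⟨i, hi⟩ := exists_ne o
    simpa [hi] using congrFun h i

theorem IsFacetFrame.exists_linearMap [Finite κ] [Nontrivial κ] (h : IsFacetFrame o p q) :
    ∃ (A : (κ → K) →ₗ[K] V) (hA : Function.Injective A),
      Projectivization.map A hA ∘ stdVertex K = p ∧
        Projectivization.map A hA (stdUnit K o) = q := by
  have := Fintype.ofFinite κ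
  have hrep : LinearIndependent K fun i => (p i).rep :=
    Projectivization.independent_iff.1 h.independent
  obtain ⟨a, ha, hqa⟩ := (Finsupp.mem_span_image_iff_linearCombination K).1
    (face_eq_span (p := p) ▸ submodule_le_iff_rep_mem.1 h.unit_le_face)
  have hao : a o = 0 := by simpa using (Finsupp.mem_supported' K a).1 ha o
  have ha0 : ∀ i ≠ o, a i ≠ 0 := fun i hi hai => h.unit_not_le_face i hi <| by
    rw [submodule_le_iff_rep_mem, face_eq_span, Finsupp.mem_span_image_iff_linearCombination]
    refine ⟨a, (Finsupp.mem_supported' K a).2 fun j hj => ?_, hqa⟩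
    rcases not_not.1 hj with rfl | rfl
    exacts [hao, hai]
  let u : κ → Kˣ := fun i => if hi : i = o then 1 else .mk0 (a i) (ha0 i hi)
  have hA := (hrep.units_smul u).fintypeLinearCombination_injective
  have hAo : Fintype.linearCombination K (u • fun i => (p i).rep) (Function.update 1 o 0) =
      q.rep := by
    rw [← hqa, Finsupp.linearCombination_apply, Fintype.linearCombination_apply,
      Finsupp.sum_fintype a _ fun i => zero_smul K (p i).rep]
    refine Finset.sum_congr rfl fun i _ => ?_
    rcases eq_or_ne i o with rfl | hi
    · simp [hao]
    · simp [u, hi, Units.smul_def]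
  refine ⟨_, hA, funext fun i => ?_, ?_⟩
  · rw [← (p i).mk_rep]
    simp only [Function.comp_apply, stdVertex, Projectivization.map_mk]
    refine (Projectivization.mk_eq_mk_iff K _ _ _ _).2 ⟨u i, ?_⟩
    rw [Fintype.linearCombination_apply_single, one_smul]
    rfl
  · simp only [stdUnit, Projectivization.map_mk, hAo, Projectivization.mk_rep]

end Frames

section StandardCoordinates

variable {κ K : Type*} [DecidableEq κ] [DivisionRing K] {o : κ}

theorem mem_face_stdVertex_iff [Finite κ] {s : Set κ} {x : κ → K} :
    x ∈ face (stdVertex K) s ↔ ∀ i ∉ s, x i = 0 := by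
  have hface : face (stdVertex K) s = Submodule.span K (Pi.basisFun K κ '' s) := by
    simp only [face, stdVertex, Projectivization.submodule_mk, Set.image_eq_iUnion,
      Submodule.span_iUnion₂, Pi.basisFun_apply]
  rw [hface, Module.Basis.mem_span_image, Finsupp.support_subset_iff]
  simp only [Pi.basisFun_repr]

theorem mem_face_stdVertex_sup_mk_iff [Finite κ] {s : Set κ} {x y : κ → K} (hx : x ≠ 0) :
    y ∈ face (stdVertex K) s ⊔ (Projectivization.mk K x hx).submodule ↔
      ∃ a : K, ∀ i ∉ s, y i = a * x i := by
  rw [Projectivization.submodule_mk]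
  constructor
  · intro h
    obtain ⟨z, hz, _, hw, rfl⟩ := Submodule.mem_sup.1 h
    obtain ⟨a, rfl⟩ := Submodule.mem_span_singleton.1 hw
    refine ⟨a, fun i hi => ?_⟩
    rw [Pi.add_apply, mem_face_stdVertex_iff.1 hz i hi, zero_add, Pi.smul_apply, smul_eq_mul]
  · rintro ⟨a, ha⟩
    refine Submodule.mem_sup.2 ⟨y - a • x, ?_, a • x, ?_, sub_add_cancel _ _⟩
    · exact mem_face_stdVertex_iff.2 fun i hi => sub_eq_zero.2 (ha i hi)
    · exact Submodule.smul_mem _ _ (Submodule.mem_span_singleton_self x)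

/-- The point with affine coordinates `x i`, `i ≠ o`, in the chart complementary to the facet
opposite to the vertex `stdVertex K o`. The value `x o` is ignored. -/
def affinePoint (o : κ) (x : κ → K) : ℙ K (κ → K) :=
  .mk K (Function.update x o 1) fun h => by simpa using congrFun h o

theorem affinePoint_eq_affinePoint_iff {x y : κ → K} :
    affinePoint o x = affinePoint o y ↔ ∀ i ≠ o, x i = y i := by
  rw [affinePoint, affinePoint, Projectivization.mk_eq_mk_iff']
  constructor
  · rintro ⟨a, h⟩ i hi
    obtain rfl : a = 1 := by simpa using congrFun h o
    simpa [hi] using (congrFun h i).symm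
  · refine fun h => ⟨1, funext fun i => ?_⟩
    rcases eq_or_ne i o with rfl | hi
    · simp
    · simp [hi, h i hi]

theorem affinePoint_zero : affinePoint o (0 : κ → K) = stdVertex K o :=
  rfl

theorem exists_eq_affinePoint [Finite κ] {P : ℙ K (κ → K)}
    (hP : ¬ P.submodule ≤ face (stdVertex K) {o}ᶜ) : ∃ x, P = affinePoint o x := by
  induction P with | h x hx =>
  have hxo : x o ≠ 0 := by
    simpa [mk_submodule_le_iff, mem_face_stdVertex_iff] using hP
  refine ⟨(x o)⁻¹ • x, (Projectivization.mk_eq_mk_iff' K _ _ _ _).2 ⟨x o, funext fun i => ?_⟩⟩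
  rcases eq_or_ne i o with rfl | hi
  · simp
  · simp [hi, hxo]

theorem affinePoint_le_face_sup_iff [Finite κ] {i : κ} (hi : i ≠ o) {x y : κ → K} :
    (affinePoint o y).submodule ≤ face (stdVertex K) {o, i}ᶜ ⊔ (affinePoint o x).submodule ↔
      y i = x i := by
  simp only [affinePoint, mk_submodule_le_iff, mem_face_stdVertex_sup_mk_iff]
  constructor
  · rintro ⟨a, h⟩
    obtain rfl : a = 1 := by simpa using (h o (by simp)).symm
    simpa [hi] using h i (by simp)
  · refine fun h => ⟨1, fun j hj => ?_⟩
    rcases not_not.1 hj with rfl | rfl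
    · simp
    · simpa [hi] using h

theorem mk_le_stdVertex_sup_affinePoint_iff [Finite κ] {x y : κ → K} {hy : y ≠ 0} :
    (Projectivization.mk K y hy).submodule ≤
        (stdVertex K o).submodule ⊔ (affinePoint o x).submodule ↔
      ∃ a : K, ∀ i ≠ o, y i = a * x i := by
  rw [← face_singleton (p := stdVertex K), affinePoint, mk_submodule_le_iff,
    mem_face_stdVertex_sup_mk_iff]
  exact exists_congr fun a => forall₂_congr fun i hi => by rw [Function.update_of_ne hi]

theorem affinePoint_le_stdUnit_sup_iff [Nontrivial κ] {x y : κ → K} :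
    (affinePoint o y).submodule ≤ (stdUnit K o).submodule ⊔ (affinePoint o x).submodule ↔
      ∃ c : K, ∀ i ≠ o, y i = c + x i := by
  simp only [affinePoint, stdUnit, Projectivization.submodule_mk,
    Submodule.span_singleton_le_iff_mem, ← Submodule.span_insert, Submodule.mem_span_pair]
  constructor
  · rintro ⟨c, a, h⟩
    obtain rfl : a = 1 := by simpa using congrFun h o
    refine ⟨c, fun i hi => ?_⟩
    simpa [hi] using (congrFun h i).symm
  · rintro ⟨c, h⟩
    refine ⟨c, 1, funext fun i => ?_⟩
    rcases eq_or_ne i o with rfl | hi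
    · simp
    · simp [hi, h i hi]

end StandardCoordinates

section SemilinearMaps

variable {κ K L : Type*} [DivisionRing K] [DivisionRing L]

/-- The semilinear map `x ↦ fun i => σ (x i) * e i`, the form taken by a map which fixes the
vertices of the coordinate simplex; the scalars go on the right since `L` need not commute. -/
def diagonalMap (σ : K →+* L) (e : κ → L) : (κ → K) →ₛₗ[σ] (κ → L) where
  toFun x i := σ (x i) * e i
  map_add' x y := funext fun i => by simp [add_mul]
  map_smul' a x := funext fun i => by simp [mul_assoc]

theorem diagonalMap_injective (σ : K →+* L) {e : κ → L} (he : ∀ i, e i ≠ 0) :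
    Function.Injective (diagonalMap σ e) := fun _ _ h =>
  funext fun i => σ.injective (mul_right_cancel₀ (he i) (congrFun h i))

theorem exists_ringHom_eq_mul {f : K → L} (h1 : f 1 ≠ 0) (hadd : ∀ a b, f (a + b) = f a + f b)
    (hmul : ∀ a b, f (a * b) = f a * (f 1)⁻¹ * f b) :
    ∃ σ : K →+* L, ∀ a, f a = σ a * f 1 := by
  refine ⟨RingHom.mk' ⟨⟨fun a => f a * (f 1)⁻¹, mul_inv_cancel₀ h1⟩, fun a b => ?_⟩ fun a b => ?_,
    fun a => (inv_mul_cancel_right₀ h1 (f a)).symm⟩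
  · simp only [hmul, mul_assoc]
  · simp only [MonoidHom.coe_mk, OneHom.coe_mk, hadd, add_mul]

end SemilinearMaps

section SemilinearOfFrame

variable {κ K L : Type*} [DecidableEq κ] [DivisionRing K] [DivisionRing L] {o : κ}

/-- The function `f` is `G` read in affine coordinates, where `G` acts on each coordinate
separately and in the same way. -/
def ActsCoordinatewise (o : κ) (G : ℙ K (κ → K) → ℙ L (κ → L)) (f : K → L) : Prop :=
  ∀ x : κ → K, G (affinePoint o x) = affinePoint o (f ∘ x)

/-- The normal form of a map that maps lines through the points of a facet frame into lines: it
fixes the coordinate simplex and the unit point of one of its facets. -/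
structure FixesFacetFrame [Nontrivial κ] (o : κ) (G : ℙ K (κ → K) → ℙ L (κ → L)) : Prop where
  map_vertex : ∀ i, G (stdVertex K i) = stdVertex L i
  map_unit : G (stdUnit K o) = stdUnit L o
  mapsLinesInto_vertex : ∀ i, MapsLinesInto G (stdVertex K i)
  mapsLinesInto_unit : MapsLinesInto G (stdUnit K o)

namespace FixesFacetFrame

variable [Nontrivial κ] {G : ℙ K (κ → K) → ℙ L (κ → L)} {f : K → L}

theorem exists_apply_eq_add (h : FixesFacetFrame o G) (hf : ActsCoordinatewise o G f)
    {x y : κ → K} (hxy : ∃ c, ∀ i ≠ o, y i = c + x i) :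
    ∃ c, ∀ i ≠ o, f (y i) = c + f (x i) := by
  have hG := h.mapsLinesInto_unit (affinePoint_le_stdUnit_sup_iff.2 hxy)
  rwa [h.map_unit, hf, hf, affinePoint_le_stdUnit_sup_iff] at hG

theorem apply_zero (h : FixesFacetFrame o G) (hf : ActsCoordinatewise o G f) : f 0 = 0 := by
  obtain ⟨i, hi⟩ := exists_ne o
  have hG : affinePoint o 0 = affinePoint o (f ∘ 0) := (h.map_vertex o).symm.trans (hf 0)
  exact (affinePoint_eq_affinePoint_iff.1 hG i hi).symm

theorem apply_add (h : FixesFacetFrame o G) (hf : ActsCoordinatewise o G f)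
    (hκ : ({o}ᶜ : Set κ).Nontrivial) (a b : K) : f (a + b) = f a + f b := by
  obtain ⟨i, hi, j, hj, hij⟩ := hκ
  let x : κ → K := Pi.single j b
  obtain ⟨c, hc⟩ := h.exists_apply_eq_add hf (x := x) (y := fun k => a + x k) ⟨a, fun _ _ => rfl⟩
  have hfi : f a = c := by simpa [x, hij, h.apply_zero hf] using hc i hi
  have hfj : f (a + b) = c + f b := by simpa [x] using hc j hj
  rw [hfj, hfi]

variable [Finite κ]

theorem map_le_face_stdVertex_sup (h : FixesFacetFrame o G) {s : Set κ} {P Q : ℙ K (κ → K)}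
    (hP : P.submodule ≤ face (stdVertex K) s ⊔ Q.submodule) :
    (G P).submodule ≤ face (stdVertex L) s ⊔ (G Q).submodule := by
  rw [← funext h.map_vertex]
  refine map_le_face_sup (fun i _ => h.mapsLinesInto_vertex i) (fun R hR => ?_) hP
  rw [eq_of_submodule_le_submodule hR]

theorem map_le_face_stdVertex (h : FixesFacetFrame o G) {s : Set κ} {P : ℙ K (κ → K)}
    (hP : P.submodule ≤ face (stdVertex K) s) : (G P).submodule ≤ face (stdVertex L) s := by
  rw [← funext h.map_vertex]
  exact map_le_face (fun i _ => h.mapsLinesInto_vertex i) hP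

theorem exists_map_affinePoint (h : FixesFacetFrame o G) (x : κ → K) :
    ∃ y, G (affinePoint o x) = affinePoint o y := by
  refine exists_eq_affinePoint fun hle => ?_
  have hvertex : (stdVertex K o).submodule ≤
      face (stdVertex K) {o}ᶜ ⊔ (affinePoint o x).submodule :=
    mk_submodule_le_iff.2 <| (mem_face_stdVertex_sup_mk_iff _).2 ⟨1, by simp⟩
  have hGvertex := h.map_le_face_stdVertex_sup hvertex
  rw [sup_eq_left.2 hle, h.map_vertex, stdVertex, mk_submodule_le_iff,
    mem_face_stdVertex_iff] at hGvertex
  simpa using hGvertex o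

theorem exists_map_affinePoint_const (h : FixesFacetFrame o G) (t : K) :
    ∃ s : L, G (affinePoint o fun _ => t) = affinePoint o fun _ => s := by
  obtain ⟨y, hy⟩ := h.exists_map_affinePoint fun _ => t
  have hdiag : (affinePoint o fun _ => t).submodule ≤
      (stdUnit K o).submodule ⊔ (affinePoint o 0).submodule :=
    affinePoint_le_stdUnit_sup_iff.2 ⟨t, by simp⟩
  have hGdiag := h.mapsLinesInto_unit hdiag
  rw [affinePoint_zero, h.map_vertex, h.map_unit, hy, ← affinePoint_zero,
    affinePoint_le_stdUnit_sup_iff] at hGdiag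
  obtain ⟨s, hs⟩ := hGdiag
  exact ⟨s, hy.trans (affinePoint_eq_affinePoint_iff.2 fun i hi => by simpa using hs i hi)⟩

theorem exists_actsCoordinatewise (h : FixesFacetFrame o G) :
    ∃ f : K → L, ActsCoordinatewise o G f := by
  choose f hf using h.exists_map_affinePoint_const
  refine ⟨f, fun x => ?_⟩
  obtain ⟨y, hy⟩ := h.exists_map_affinePoint x
  rw [hy]
  refine affinePoint_eq_affinePoint_iff.2 fun i hi => ?_
  have hproj : (affinePoint o x).submodule ≤
      face (stdVertex K) {o, i}ᶜ ⊔ (affinePoint o fun _ => x i).submodule :=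
    (affinePoint_le_face_sup_iff hi).2 rfl
  have hGproj := h.map_le_face_stdVertex_sup hproj
  rwa [hy, hf, affinePoint_le_face_sup_iff hi] at hGproj

theorem exists_coord_eq_mul (h : FixesFacetFrame o G) (hf : ActsCoordinatewise o G f)
    {x y : κ → K} {z : κ → L} {hy : y ≠ 0} {hz : z ≠ 0} (hG : G (.mk K y hy) = .mk L z hz)
    (hxy : ∃ a, ∀ i ≠ o, y i = a * x i) : ∃ a, ∀ i ≠ o, z i = a * f (x i) := by
  have hGy := h.mapsLinesInto_vertex o (mk_le_stdVertex_sup_affinePoint_iff (hy := hy).2 hxy)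
  rwa [hG, h.map_vertex, hf, mk_le_stdVertex_sup_affinePoint_iff] at hGy

theorem apply_one_ne_zero (h : FixesFacetFrame o G) (hf : ActsCoordinatewise o G f) :
    f 1 ≠ 0 := fun h1 => by
  obtain ⟨i, hi⟩ := exists_ne o
  obtain ⟨a, ha⟩ := h.exists_coord_eq_mul hf (x := 1) h.map_unit
    ⟨1, fun j hj => by simp [hj]⟩
  simpa [hi, h1] using ha i hi

theorem apply_mul (h : FixesFacetFrame o G) (hf : ActsCoordinatewise o G f)
    (hκ : ({o}ᶜ : Set κ).Nontrivial) (a b : K) : f (a * b) = f a * (f 1)⁻¹ * f b := by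
  obtain ⟨i, hi, j, hj, hij⟩ := hκ
  let x : κ → K := Function.update 1 j b
  obtain ⟨c, hc⟩ := h.exists_coord_eq_mul hf (x := x) (hf fun k => a * x k)
    ⟨a, fun k hk => by simp [Function.update_of_ne hk]⟩
  have hfi : f a = c * f 1 := by simpa [x, hij, Function.update_of_ne hi] using hc i hi
  have hfj : f (a * b) = c * f b := by simpa [x, Function.update_of_ne hj] using hc j hj
  rw [hfj, hfi, mul_inv_cancel_right₀ (h.apply_one_ne_zero hf)]

theorem eq_map_diagonalMap (h : FixesFacetFrame o G) (hf : ActsCoordinatewise o G f)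
    {σ : K →+* L} {e : κ → L} (he : ∀ i, e i ≠ 0) (heo : e o = 1)
    (hfe : ∀ i ≠ o, ∀ a, f a = σ a * e i) :
    G = Projectivization.map (diagonalMap σ e) (diagonalMap_injective σ he) := by
  funext P
  by_cases hP : P.submodule ≤ face (stdVertex K) {o}ᶜ
  · induction P with | h x hx =>
    have hGP := h.map_le_face_stdVertex hP
    induction hG : G (.mk K x hx) with | h y hy =>
    have hxo : x o = 0 := by simpa [mk_submodule_le_iff, mem_face_stdVertex_iff] using hP
    have hyo : y o = 0 := by simpa [hG, mk_submodule_le_iff, mem_face_stdVertex_iff] using hGP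
    obtain ⟨a, ha⟩ := h.exists_coord_eq_mul hf hG ⟨1, fun i _ => (one_mul (x i)).symm⟩
    refine (Projectivization.mk_eq_mk_iff' L _ _ _ _).2 ⟨a, funext fun i => ?_⟩
    change a * (σ (x i) * e i) = y i
    rcases eq_or_ne i o with rfl | hi
    · rw [hxo, hyo, map_zero, zero_mul, mul_zero]
    · rw [ha i hi, hfe i hi]
  · obtain ⟨x, rfl⟩ := exists_eq_affinePoint hP
    refine (hf x).trans ((Projectivization.mk_eq_mk_iff' L _ _ _ _).2 ⟨1, funext fun i => ?_⟩)
    rw [one_smul]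
    change σ (Function.update x o 1 i) * e i = _
    rcases eq_or_ne i o with rfl | hi
    · simp [heo]
    · simp [hi, hfe i hi]

theorem exists_eq_map_diagonalMap (h : FixesFacetFrame o G) (hκ : ({o}ᶜ : Set κ).Nontrivial) :
    ∃ (σ : K →+* L) (e : κ → L) (he : ∀ i, e i ≠ 0),
      G = Projectivization.map (diagonalMap σ e) (diagonalMap_injective σ he) := by
  obtain ⟨f, hf⟩ := h.exists_actsCoordinatewise
  have h1 := h.apply_one_ne_zero hf
  obtain ⟨σ, hσ⟩ := exists_ringHom_eq_mul h1 (h.apply_add hf hκ) (h.apply_mul hf hκ)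
  have he (i : κ) : Function.update (fun _ => f 1) o 1 i ≠ 0 := by
    rcases eq_or_ne i o with rfl | hi
    · simp
    · simpa [hi] using h1
  refine ⟨σ, _, he, h.eq_map_diagonalMap hf he (Function.update_self ..) fun i hi a => ?_⟩
  rw [Function.update_of_ne hi, hσ a]

end FixesFacetFrame

end SemilinearOfFrame

section FacetFrameTheorem

variable {κ K L V W : Type*} [DivisionRing K] [DivisionRing L] [AddCommGroup V] [Module K V]
  [AddCommGroup W] [Module L W]

theorem range_eq_face [DecidableEq κ] [Finite κ] (A : (κ → K) →ₗ[K] V)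
    (hA : Function.Injective A) :
    LinearMap.range A = face (Projectivization.map A hA ∘ stdVertex K) Set.univ := by
  have htop : face (stdVertex K) (Set.univ : Set κ) = ⊤ :=
    eq_top_iff.2 fun x _ => mem_face_stdVertex_iff.2 (by simp)
  rw [← map_face, htop, Submodule.map_top]

theorem exists_eq_map_of_isFacetFrame [Finite κ] {o : κ} (hκ : ({o}ᶜ : Set κ).Nontrivial)
    {p : κ → ℙ K V} {q : ℙ K V} (hpq : IsFacetFrame o p q) (htop : face p Set.univ = ⊤)
    {F : ℙ K V → ℙ L W} (hFpq : IsFacetFrame o (F ∘ p) (F q))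
    (hp : ∀ i, MapsLinesInto F (p i)) (hq : MapsLinesInto F q) :
    ∃ (σ : K →+* L) (f : V →ₛₗ[σ] W) (hf : Function.Injective f),
      F = Projectivization.map f hf := by
  classical
  have : Nontrivial κ := Set.nontrivial_of_nontrivial hκ
  obtain ⟨A, hA, rfl, rfl⟩ := hpq.exists_linearMap
  obtain ⟨C, hC, hCp, hCq⟩ := hFpq.exists_linearMap
  have hrange (P : ℙ K (κ → K)) : F (Projectivization.map A hA P) ∈
      Set.range (Projectivization.map C hC) := by
    rw [mem_range_map_iff, range_eq_face C hC, hCp]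
    exact map_le_face (fun i _ => hp i) (htop ▸ le_top)
  choose G hG using hrange
  have hlines {Q : ℙ K (κ → K)} (hQ : MapsLinesInto F (Projectivization.map A hA Q)) :
      MapsLinesInto G Q := fun P R hR => by
    have hFR := hQ ((map_le_map_sup_map_iff A hA).2 hR)
    rwa [← hG, ← hG, ← hG, map_le_map_sup_map_iff] at hFR
  have hfix : FixesFacetFrame o G :=
    { map_vertex i := Projectivization.map_injective C hC <|
        (hG _).trans (congrFun hCp i).symm
      map_unit := Projectivization.map_injective C hC <| (hG _).trans hCq.symm
      mapsLinesInto_vertex i := hlines (hp i)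
      mapsLinesInto_unit := hlines hq }
  obtain ⟨σ, e, he, rfl⟩ := hfix.exists_eq_map_diagonalMap hκ
  have hAsurj : Function.Surjective A := LinearMap.range_eq_top.1 ((range_eq_face A hA).trans htop)
  let E := LinearEquiv.ofBijective A ⟨hA, hAsurj⟩
  refine ⟨σ, C ∘ₛₗ diagonalMap σ e ∘ₛₗ E.symm.toLinearMap,
    hC.comp ((diagonalMap_injective σ he).comp E.symm.injective), funext fun P => ?_⟩
  induction P with | h v hv =>
  let x : ℙ K (κ → K) := .mk K (E.symm v) (E.symm.map_ne_zero_iff.2 hv)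
  have hx : Projectivization.map A hA x = .mk K v hv := by
    have hAE : A (E.symm v) = v := E.apply_symm_apply v
    simp only [x, Projectivization.map_mk, hAE]
  rw [← hx, ← hG, hx]
  rfl

end FacetFrameTheorem

section HyperplanePoints

variable {κ K V : Type*} [DivisionRing K] [AddCommGroup V] [Module K V] {p : κ → ℙ K V}

theorem face_eq_of_finrank_eq {s : Set κ} [Fintype s] {S : Submodule K V} [Module.Finite K S]
    (hp : LinearIndepOn K (Projectivization.rep ∘ p) s) (hpS : ∀ i ∈ s, (p i).submodule ≤ S)
    (hS : Module.finrank K S = Fintype.card s) : face p s = S := by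
  refine Submodule.eq_of_le_of_finrank_eq (iSup₂_le hpS) ?_
  rw [face_eq_span, Set.image_eq_range, hS]
  exact finrank_span_eq_card hp

theorem isFacetFrame_update [DecidableEq κ] {o : κ} {r : ℙ K V}
    (hp : ∀ i, LinearIndepOn K (Projectivization.rep ∘ p) {i}ᶜ)
    (hpo : (p o).submodule ≤ face p {o}ᶜ) (hr : ¬ r.submodule ≤ face p {o}ᶜ) :
    IsFacetFrame o (Function.update p o r) (p o) := by
  have hupdate : Set.EqOn (Function.update p o r) p {o}ᶜ := fun i hi => Function.update_of_ne hi _ _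
  refine ⟨?_, by rwa [face_congr hupdate], fun i hi hle => ?_⟩
  · have huniv : insert o ({o}ᶜ : Set κ) = Set.univ := by ext; simp [em]
    rw [Projectivization.independent_iff, ← linearIndepOn_univ_iff, ← huniv,
      linearIndepOn_insert (by simp)]
    refine ⟨(hp o).congr hupdate.symm.comp_left, ?_⟩
    rwa [← face_eq_span, Function.comp_apply, ← submodule_le_iff_rep_mem, face_congr hupdate,
      Function.update_self]
  · have hinsert : ({i}ᶜ : Set κ) = insert o {o, i}ᶜ := by
      ext j; by_cases hj : j = o <;> simp [hj, hi.symm]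
    have hpi := hp i
    rw [hinsert, linearIndepOn_insert (by simp), ← face_eq_span, Function.comp_apply,
      ← submodule_le_iff_rep_mem] at hpi
    refine hpi.2 ?_
    rwa [face_congr (hupdate.mono (by simp))] at hle

end HyperplanePoints

theorem projective_linear_of_hyperplane_points_general
    {K L V W : Type*} [DivisionRing K] [DivisionRing L] [AddCommGroup V] [Module K V]
    [AddCommGroup W] [Module L W] {n : ℕ} (hn : 2 ≤ n) (hV : Module.finrank K V = n + 1)
    (H : Submodule K V) (hH : Module.finrank K H = n)
    (p : Fin (n + 1) → ℙ K V) (hpH : ∀ i, (p i).submodule ≤ H)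
    (hp : ∀ s : Finset (Fin (n + 1)), s.card = n → LinearIndependent K fun i : s => (p i).rep)
    (r : ℙ K V) (hr : ¬ r.submodule ≤ H) (F : ℙ K V → ℙ L W) (hinj : Function.Injective F)
    (hline : ∀ l : Set (ℙ K V), IsLine l → ((∃ i, p i ∈ l) ∨ r ∈ l) → IsLine (F '' l)) :
    ∃ (σ : K →+* L) (f : V →ₛₗ[σ] W) (hf : Function.Injective f),
      F = Projectivization.map f hf := by
  have : Module.Finite K V := Module.finite_of_finrank_eq_succ hV
  have hindep (i : Fin (n + 1)) : LinearIndepOn K (Projectivization.rep ∘ p) {i}ᶜ := by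
    have hi : LinearIndepOn K (Projectivization.rep ∘ p) ({i}ᶜ : Finset (Fin (n + 1))) :=
      hp _ (by simp [Finset.card_compl])
    rwa [Finset.coe_compl, Finset.coe_singleton] at hi
  let o := Fin.last n
  have hface : face p {o}ᶜ = H :=
    face_eq_of_finrank_eq (hindep o) (fun i _ => hpH i) (by rw [hH, Fintype.card_compl_set]; simp)
  have hframe : IsFacetFrame o (Function.update p o r) (p o) :=
    isFacetFrame_update hindep (hface ▸ hpH o) (hface ▸ hr)
  have hspan : face (Function.update p o r) Set.univ = ⊤ :=
    face_eq_of_finrank_eq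
      (linearIndepOn_univ_iff.2 (Projectivization.independent_iff.1 hframe.independent))
      (fun _ _ => le_top) (by simp [hV])
  have hF (i : Fin (n + 1)) : MapsLinesOnto F (p i) :=
    mapsLinesOnto_of_isLine_image hinj fun l hl hi => hline l hl (.inl ⟨i, hi⟩)
  have hFr : MapsLinesOnto F r :=
    mapsLinesOnto_of_isLine_image hinj fun l hl hr => hline l hl (.inr hr)
  have hFv : ∀ i, MapsLinesOnto F (Function.update p o r i) :=
    (Function.forall_update_iff p fun _ P => MapsLinesOnto F P).2 ⟨hFr, fun i _ => hF i⟩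
  have ho : ({o}ᶜ : Set (Fin (n + 1))).Nontrivial := by
    rw [← Set.one_lt_ncard_iff_nontrivial, Set.ncard_compl, Set.ncard_singleton, Nat.card_fin]
    lia
  exact exists_eq_map_of_isFacetFrame ho hframe hspan (hframe.map hinj hFv)
    (fun i => (hFv i).mapsLinesInto) (hF o).mapsLinesInto

/-- **Theorem (fundamental theorem of projective geometry, n+1 points on a hyperplane).**
Let `n ≥ 2`, let `H̄` be a projective subspace of codimension `1` (the projectivization
of an `n`-dimensional linear subspace `H ⊂ ℝ^{n+1}`), let `p̄₁,…,p̄_{n+1} ∈ H̄` be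
generic in `H̄` (every `n` of their lifts are linearly independent), and let
`p̄_{n+2} = r ∈ ℝPⁿ \ H̄`. If `F : ℝPⁿ → ℝPⁿ` is injective and maps every projective
line through one of `p̄₁,…,p̄_{n+2}` onto a projective line, then `F` is
projective-linear. -/
theorem projective_linear_of_hyperplane_points
    {n : ℕ} (hn : 2 ≤ n)
    (H : Submodule ℝ (Fin (n + 1) → ℝ)) (hH : Module.finrank ℝ H = n)
    (p : Fin (n + 1) → ℙ ℝ (Fin (n + 1) → ℝ))
    (hpH : ∀ i, (p i).submodule ≤ H)
    (hp : ∀ s : Finset (Fin (n + 1)), s.card = n →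
      LinearIndependent ℝ (fun i : s => (p i.1).rep))
    (r : ℙ ℝ (Fin (n + 1) → ℝ))
    (hr : ¬ r.submodule ≤ H)
    (F : ℙ ℝ (Fin (n + 1) → ℝ) → ℙ ℝ (Fin (n + 1) → ℝ))
    (hinj : Function.Injective F)
    (hline : ∀ l : Set (ℙ ℝ (Fin (n + 1) → ℝ)), IsProjLine l →
      ((∃ i, p i ∈ l) ∨ r ∈ l) → IsProjLine (F '' l)) :
    IsProjLinear F := by
  obtain ⟨σ, f, hf, rfl⟩ := projective_linear_of_hyperplane_points_general hn
    (Module.finrank_fin_fun ℝ) H hH p hpH hp r hr F hinj hline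
  obtain rfl : σ = RingHom.id ℝ := Subsingleton.elim _ _
  exact ⟨LinearEquiv.ofInjectiveEndo f hf, rfl⟩
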